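/- Let σ : [0,∞) → ℝ be absolutely continuous and suppose that for almost every t, σ'(t)·σ(t) ≤ −c·|σ(t)| with c > 0. Then for all t ≥ 0, |σ(t)| ≤ max(|σ(0)| − c·t, 0). In particular σ(t) = 0 for all t ≥ |σ(0)|/c. -/

import Mathlib

open MeasureTheory intervalIntegral

/-!
At a point of differentiability where `σ ≠ 0`, the derivative of `‖σ‖` is `⟪σ', σ⟫ / ‖σ‖`, so the
differential inequality says that `‖σ‖` has slope at most `-c` almost everywhere on `{σ ≠ 0}`. As
`‖σ‖` is absolutely continuous, it lies below the line `‖σ 0‖ - c * t` until `σ` first vanishes.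
It cannot leave zero again: after its last zero it would be positive with nonpositive slope.
-/

theorem absolutelyContinuousOnInterval_of_dist_le {X Y : Type*} [PseudoMetricSpace X]
    [PseudoMetricSpace Y] {f : ℝ → X} {g : ℝ → Y} {a b : ℝ}
    (hf : AbsolutelyContinuousOnInterval f a b)
    (hgf : ∀ x ∈ Set.uIcc a b, ∀ y ∈ Set.uIcc a b, dist (g x) (g y) ≤ dist (f x) (f y)) :
    AbsolutelyContinuousOnInterval g a b := by
  rw [absolutelyContinuousOnInterval_iff] at hf ⊢
  intro ε hε
  obtain ⟨δ, hδ, hfδ⟩ := hf ε hε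
  refine ⟨δ, hδ, fun E hE hlength ↦ (Finset.sum_le_sum fun i hi ↦ ?_).trans_lt (hfδ E hE hlength)⟩
  exact hgf _ (hE.1 i hi).1 _ (hE.1 i hi).2

theorem absolutelyContinuousOnInterval_norm {E : Type*} [SeminormedAddCommGroup E] {f : ℝ → E}
    {a b : ℝ} (hf : AbsolutelyContinuousOnInterval f a b) :
    AbsolutelyContinuousOnInterval (fun t ↦ ‖f t‖) a b :=
  absolutelyContinuousOnInterval_of_dist_le hf fun x _ y _ ↦
    (dist_norm_norm_le (f x) (f y)).trans_eq (dist_eq_norm (f x) (f y)).symm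

section Primitive

theorem absolutelyContinuousOnInterval_of_sub_eq_integral {f f' : ℝ → ℝ} {a b : ℝ}
    (hint : IntervalIntegrable f' volume a b)
    (hf : ∀ x ∈ Set.uIcc a b, f x - f a = ∫ t in a..x, f' t) :
    AbsolutelyContinuousOnInterval f a b := by
  refine absolutelyContinuousOnInterval_of_dist_le
    (hint.absolutelyContinuousOnInterval_intervalIntegral Set.left_mem_uIcc) fun x hx y hy ↦ ?_
  rw [← hf x hx, ← hf y hy, dist_sub_right]

variable {E : Type*} [NormedAddCommGroup E] [NormedSpace ℝ E] [CompleteSpace E] {f f' : ℝ → E}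

theorem ae_hasDerivAt_of_sub_eq_integral {a b : ℝ} (hint : IntervalIntegrable f' volume a b)
    (hf : ∀ x ∈ Set.Ioo a b, f x - f a = ∫ t in a..x, f' t) :
    ∀ᵐ t, t ∈ Set.Ioo a b → HasDerivAt f (f' t) t := by
  filter_upwards [hint.ae_hasDerivAt_integral] with t ht htab
  have hprimitive : HasDerivAt (fun x ↦ (∫ s in a..x, f' s) + f a) (f' t) t :=
    (ht (Set.Icc_subset_uIcc (Set.Ioo_subset_Icc_self htab)) a Set.left_mem_uIcc).add_const (f a)
  refine hprimitive.congr_of_eventuallyEq ?_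
  filter_upwards [Ioo_mem_nhds htab.1 htab.2] with x hx
  rw [← hf x hx, sub_add_cancel]

theorem ae_hasDerivAt_Ioi_of_sub_eq_integral {a : ℝ}
    (hint : ∀ b, a ≤ b → IntervalIntegrable f' volume a b)
    (hf : ∀ x, a ≤ x → f x - f a = ∫ t in a..x, f' t) :
    ∀ᵐ t, a < t → HasDerivAt f (f' t) t := by
  have hderiv : ∀ n : ℕ, ∀ᵐ t, t ∈ Set.Ioo a (a + n) → HasDerivAt f (f' t) t := fun n ↦
    ae_hasDerivAt_of_sub_eq_integral (hint _ (by simp)) fun x hx ↦ hf x hx.1.le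
  filter_upwards [ae_all_iff.mpr hderiv] with t ht hat
  obtain ⟨n, hn⟩ := exists_nat_gt (t - a)
  exact ht n ⟨hat, sub_lt_iff_lt_add'.mp hn⟩

end Primitive

section SlopeBounds

variable {f : ℝ → ℝ} {a b : ℝ}

theorem sub_le_mul_sub_of_ae_deriv_le {m : ℝ} (hab : a ≤ b)
    (hf : AbsolutelyContinuousOnInterval f a b)
    (hderiv : ∀ᵐ t, t ∈ Set.Ioo a b → deriv f t ≤ m) :
    f b - f a ≤ m * (b - a) := by
  have hle : deriv f ≤ᵐ[volume.restrict (Set.Icc a b)] fun _ ↦ m := by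
    rw [← restrict_Ioo_eq_restrict_Icc]
    exact (ae_restrict_iff' measurableSet_Ioo).mpr hderiv
  calc f b - f a = ∫ t in a..b, deriv f t := hf.integral_deriv_eq_sub.symm
    _ ≤ ∫ _ in a..b, m :=
      integral_mono_ae_restrict hab hf.intervalIntegrable_deriv intervalIntegrable_const hle
    _ = m * (b - a) := by rw [intervalIntegral.integral_const, smul_eq_mul, mul_comm]

theorem exists_last_nonpos (hab : a ≤ b) (hf : ContinuousOn f (Set.Icc a b)) (ha : f a ≤ 0) :
    ∃ s ∈ Set.Icc a b, f s ≤ 0 ∧ ∀ t ∈ Set.Ioc s b, 0 < f t := by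
  have hcompact : IsCompact (Set.Icc a b ∩ f ⁻¹' Set.Iic 0) :=
    isCompact_Icc.of_isClosed_subset (hf.preimage_isClosed_of_isClosed isClosed_Icc isClosed_Iic)
      Set.inter_subset_left
  obtain ⟨s, ⟨hs, hfs⟩, hlast⟩ := hcompact.exists_isGreatest ⟨a, Set.left_mem_Icc.mpr hab, ha⟩
  refine ⟨s, hs, hfs, fun t ht ↦ ?_⟩
  by_contra! hft
  exact ht.1.not_ge (hlast ⟨⟨hs.1.trans ht.1.le, ht.2⟩, hft⟩)

theorem nonpos_of_ae_deriv_nonpos_of_pos (hab : a ≤ b) (hf : AbsolutelyContinuousOnInterval f a b)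
    (hderiv : ∀ᵐ t, t ∈ Set.Ioo a b → 0 < f t → deriv f t ≤ 0) (ha : f a ≤ 0) :
    f b ≤ 0 := by
  obtain ⟨s, hs, hfs, hpos⟩ := exists_last_nonpos hab (Set.uIcc_of_le hab ▸ hf.continuousOn) ha
  have hfs_b : AbsolutelyContinuousOnInterval f s b :=
    hf.mono (Set.uIcc_subset_uIcc_right (Set.Icc_subset_uIcc hs))
  have hdecrease : f b - f s ≤ 0 * (b - s) := by
    refine sub_le_mul_sub_of_ae_deriv_le hs.2 hfs_b ?_
    filter_upwards [hderiv] with t ht hts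
    exact ht ⟨hs.1.trans_lt hts.1, hts.2⟩ (hpos t ⟨hts.1, hts.2.le⟩)
  linarith

theorem le_max_sub_mul_of_ae_deriv_le_of_pos {c : ℝ} (hc : 0 ≤ c) (hab : a ≤ b)
    (hf : AbsolutelyContinuousOnInterval f a b)
    (hderiv : ∀ᵐ t, t ∈ Set.Ioo a b → 0 < f t → deriv f t ≤ -c) :
    f b ≤ max (f a - c * (b - a)) 0 := by
  by_cases hpos : ∀ s ∈ Set.Icc a b, 0 < f s
  · have hdecrease : f b - f a ≤ -c * (b - a) := by
      refine sub_le_mul_sub_of_ae_deriv_le hab hf ?_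
      filter_upwards [hderiv] with t ht htab
      exact ht htab (hpos t (Set.Ioo_subset_Icc_self htab))
    exact le_max_of_le_left (by linarith)
  · push Not at hpos
    obtain ⟨s, hs, hfs⟩ := hpos
    refine le_max_of_le_right (nonpos_of_ae_deriv_nonpos_of_pos hs.2
      (hf.mono (Set.uIcc_subset_uIcc_right (Set.Icc_subset_uIcc hs))) ?_ hfs)
    filter_upwards [hderiv] with t ht hts hft
    exact (ht ⟨hs.1.trans_lt hts.1, hts.2⟩ hft).trans (neg_nonpos.mpr hc)

end SlopeBounds

section Norm

variable {E : Type*} [NormedAddCommGroup E] [InnerProductSpace ℝ E] {σ σ' : ℝ → E}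

theorem hasDerivAt_norm_of_ne_zero {v : E} {t : ℝ} (hσ : HasDerivAt σ v t) (hne : σ t ≠ 0) :
    HasDerivAt (fun s ↦ ‖σ s‖) (inner ℝ v (σ t) / ‖σ t‖) t := by
  have hsqrt := hσ.norm_sq.sqrt (pow_ne_zero 2 (norm_ne_zero_iff.mpr hne))
  simpa only [Real.sqrt_sq (norm_nonneg _), real_inner_comm v,
    mul_div_mul_left _ _ (two_ne_zero' ℝ)] using hsqrt

theorem norm_le_max_sub_mul_of_ae_inner_le {a b c : ℝ} (hc : 0 ≤ c) (hab : a ≤ b)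
    (hσ : AbsolutelyContinuousOnInterval σ a b)
    (hderiv : ∀ᵐ t, t ∈ Set.Ioo a b → HasDerivAt σ (σ' t) t)
    (hineq : ∀ᵐ t, t ∈ Set.Ioo a b → inner ℝ (σ' t) (σ t) ≤ -c * ‖σ t‖) :
    ‖σ b‖ ≤ max (‖σ a‖ - c * (b - a)) 0 := by
  refine le_max_sub_mul_of_ae_deriv_le_of_pos hc hab (absolutelyContinuousOnInterval_norm hσ) ?_
  filter_upwards [hderiv, hineq] with t hderiv_t hineq_t ht hpos
  rw [(hasDerivAt_norm_of_ne_zero (hderiv_t ht) (norm_pos_iff.mp hpos)).deriv, div_le_iff₀ hpos]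
  exact hineq_t ht

theorem stmt2_general {c : ℝ} (hc : 0 < c)
    (hσ : ∀ b, 0 ≤ b → AbsolutelyContinuousOnInterval σ 0 b)
    (hderiv : ∀ᵐ t, 0 < t → HasDerivAt σ (σ' t) t)
    (hineq : ∀ᵐ t, 0 < t → inner ℝ (σ' t) (σ t) ≤ -c * ‖σ t‖) :
    (∀ t, 0 ≤ t → ‖σ t‖ ≤ max (‖σ 0‖ - c * t) 0) ∧ (∀ t, ‖σ 0‖ / c ≤ t → σ t = 0) := by
  have hbound : ∀ t, 0 ≤ t → ‖σ t‖ ≤ max (‖σ 0‖ - c * t) 0 := fun t ht ↦ by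
    simpa only [sub_zero] using norm_le_max_sub_mul_of_ae_inner_le hc.le ht (hσ t ht)
      (hderiv.mono fun s hs hst ↦ hs hst.1) (hineq.mono fun s hs hst ↦ hs hst.1)
  refine ⟨hbound, fun t ht ↦ norm_le_zero_iff.mp ?_⟩
  have ht₀ : 0 ≤ t := (div_nonneg (norm_nonneg _) hc.le).trans ht
  have hline : ‖σ 0‖ - c * t ≤ 0 := sub_nonpos.mpr ((div_le_iff₀' hc).mp ht)
  exact (hbound t ht₀).trans_eq (max_eq_right hline)

end Norm

/-- If `σ` is absolutely continuous with a.e. derivative `σ'` satisfying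
`σ'(t)·σ(t) ≤ −c·|σ(t)|` with `c > 0`, then `|σ(t)| ≤ max(|σ(0)| − c·t, 0)` and
in particular `σ(t) = 0` for all `t ≥ |σ(0)|/c`. -/
theorem stmt2 (σ σ' : ℝ → ℝ) (c : ℝ) (hc : 0 < c)
    (hcont : Continuous σ)
    (hint : ∀ a b : ℝ, 0 ≤ a → a ≤ b → IntervalIntegrable σ' volume a b)
    (hFTC : ∀ a b : ℝ, 0 ≤ a → a ≤ b → σ b - σ a = ∫ t in a..b, σ' t)
    (hineq : ∀ᵐ t : ℝ, 0 ≤ t → σ' t * σ t ≤ -c * |σ t|) :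
    (∀ t : ℝ, 0 ≤ t → |σ t| ≤ max (|σ 0| - c * t) 0) ∧
    (∀ t : ℝ, |σ 0| / c ≤ t → σ t = 0) :=
  stmt2_general hc
    (fun b hb ↦ absolutelyContinuousOnInterval_of_sub_eq_integral (hint 0 b le_rfl hb)
      fun x hx ↦ hFTC 0 x le_rfl (Set.uIcc_of_le hb ▸ hx).1)
    (ae_hasDerivAt_Ioi_of_sub_eq_integral (hint 0 · le_rfl) (hFTC 0 · le_rfl))
    (hineq.mono fun t ht htpos ↦ by simpa [mul_comm] using ht htpos.le)
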